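/- Let n ≥ 3, k an integer with 1 < k < n/2, and p > nk/(n-2k). Let u be a regular solution of the initial value problem -(1/k)·C(n-1,k-1)·(r^{n-k}|u'|^{k-1}u')' = r^{n-1}u^p, u > 0, u'(0) = 0, u(0) = ρ > 0, and suppose u(r)/u_s(r) → 1 as r → ∞, where u_s(r) = A·r^{-2k/(p-k)} with A = ((1/k)·C(n-1,k-1))^{1/(p-k)}·(2k/(p-k))^{k/(p-k)}·(n − 2pk/(p-k))^{1/(p-k)}. Then u'(r)/u_s'(r) → 1 as r → ∞. -/

import Mathlib

open MeasureTheory Real Set Filter Asymptotics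

noncomputable section

namespace KHessianPaper

/-- The binomial coefficient `C(n-1, k-1)` as a real number. -/
def binomC (n k : ℕ) : ℝ := ((n - 1).choose (k - 1) : ℝ)

/-- The flux `w(r) = r^{n-k} |u'(r)|^{k-1} u'(r)`. -/
def flux (n k : ℕ) (u : ℝ → ℝ) (r : ℝ) : ℝ :=
  r ^ (n - k) * |deriv u r| ^ (k - 1) * deriv u r

/-- `u` is a regular solution of the radial `k`-Hessian initial value problem
`-(1/k) C(n-1,k-1) (r^{n-k} |u'|^{k-1} u')' = r^{n-1} u^p`, `u > 0`, `u'(0) = 0`, `u(0) = ρ`. -/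
structure IsRegularSolution (n k : ℕ) (p ρ : ℝ) (u : ℝ → ℝ) : Prop where
  contDiffOn : ContDiffOn ℝ 1 u (Ici 0)
  deriv_zero : derivWithin u (Ici 0) 0 = 0
  init : u 0 = ρ
  pos : ∀ r : ℝ, 0 ≤ r → 0 < u r
  eqn : ∀ r : ℝ, 0 < r →
    HasDerivAt (flux n k u) (-((k : ℝ) / binomC n k) * r ^ (n - 1) * u r ^ p) r
  radial_smooth : ContDiff ℝ 2 (fun x : EuclideanSpace ℝ (Fin n) => -u ‖x‖)

/-- `φ : [0,∞) → ℝ` is the radial profile of a smooth compactly supported function on `ℝⁿ`. -/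
def MemWStar (n : ℕ) (φ : ℝ → ℝ) : Prop :=
  ∃ Φ : EuclideanSpace ℝ (Fin n) → ℝ,
    ContDiff ℝ (⊤ : ℕ∞) Φ ∧ HasCompactSupport Φ ∧ ∀ x, Φ x = φ ‖x‖

/-- The weak form of the equation tested against `φ`. -/
def WeakEqn (n k : ℕ) (p : ℝ) (u φ : ℝ → ℝ) : Prop :=
  ∫ r in Ioi (0 : ℝ),
      ((1 / (k : ℝ)) * binomC n k * r ^ (n - k) * |deriv u r| ^ (k - 1) * deriv u r
          * deriv φ r
        - r ^ (n - 1) * u r ^ p * φ r) = 0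

/-- The second-variation quadratic form `Q_u(φ)`. -/
def Qform (n k : ℕ) (p : ℝ) (u φ : ℝ → ℝ) : ℝ :=
  binomC n k * ∫ r in Ioi (0 : ℝ), r ^ (n - k) * |deriv u r| ^ (k - 1) * (deriv φ r) ^ 2
    - p * ∫ r in Ioi (0 : ℝ), r ^ (n - 1) * u r ^ (p - 1) * (φ r) ^ 2

/-- `u` is a positive stable solution of the radial `k`-Hessian equation. -/
def IsStableSolution (n k : ℕ) (p : ℝ) (u : ℝ → ℝ) : Prop :=
  (∀ r : ℝ, 0 < r → 0 < u r) ∧ ContDiffOn ℝ 1 u (Ioi 0) ∧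
  (∀ φ, MemWStar n φ → WeakEqn n k p u φ) ∧
  (∀ φ, MemWStar n φ → 0 ≤ Qform n k p u φ)

/-- `u` is a positive stable solution on `(R,∞)` of the radial `k`-Hessian equation. -/
def IsStableSolutionOn (n k : ℕ) (p : ℝ) (R : ℝ) (u : ℝ → ℝ) : Prop :=
  (∀ r : ℝ, 0 < r → 0 < u r) ∧ ContDiffOn ℝ 1 u (Ioi 0) ∧
  (∀ φ, MemWStar n φ → WeakEqn n k p u φ) ∧
  (∀ φ : ℝ → ℝ, ContDiff ℝ (⊤ : ℕ∞) φ → HasCompactSupport φ → tsupport φ ⊆ Ioi R →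
    0 ≤ Qform n k p u φ)

/-- The constant `A` in the singular solution `u_s(r) = A r^{-2k/(p-k)}`. -/
def Aconst (n k : ℕ) (p : ℝ) : ℝ :=
  ((1 / (k : ℝ)) * binomC n k) ^ (1 / (p - k))
    * (2 * (k : ℝ) / (p - (k : ℝ))) ^ ((k : ℝ) / (p - k))
    * ((n : ℝ) - 2 * p * k / (p - k)) ^ (1 / (p - k))

/-- The singular solution `u_s(r) = A r^{-2k/(p-k)}`. -/
def uSing (n k : ℕ) (p : ℝ) (r : ℝ) : ℝ := Aconst n k p * r ^ (-(2 * (k : ℝ) / (p - k)))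

/-- The Joseph–Lundgren exponent (finite form, relevant when `n > 2k+8`). -/
def pJL (n k : ℕ) : ℝ :=
  ((k : ℝ) * ((n : ℝ) ^ 2 - 2 * ((k : ℝ) + 3) * (n : ℝ) + 4 * (k : ℝ))
      + 4 * (k : ℝ) * Real.sqrt (2 * ((k : ℝ) + 1) * (n : ℝ) - 4 * (k : ℝ)))
    / (((n : ℝ) - 2 * (k : ℝ)) * ((n : ℝ) - 2 * (k : ℝ) - 8))

/-- The exponent `p* = k(n+2k)/(n-2k)`. -/
def pStar (n k : ℕ) : ℝ := (k : ℝ) * ((n : ℝ) + 2 * (k : ℝ)) / ((n : ℝ) - 2 * (k : ℝ))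

/-! The singular solution `u_s` solves the same equation as `u`. Hence, as `u ~ u_s`, the
derivatives of the two fluxes are asymptotically equivalent. The flux of `u_s` diverges, so the
fluxes themselves are equivalent by l'Hôpital's rule, and their quotient is the image of
`u' / u_s'` under the strictly increasing function `t ↦ |t| ^ (k - 1) * t`, which fixes `1`. -/

lemma isLittleO_of_hasDerivAt {E : Type*} [NormedAddCommGroup E] [NormedSpace ℝ E]
    {f f' : ℝ → E} {g g' : ℝ → ℝ}
    (hf : ∀ᶠ x in atTop, HasDerivAt f (f' x) x) (hg : ∀ᶠ x in atTop, HasDerivAt g (g' x) x)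
    (hg' : ∀ᶠ x in atTop, 0 ≤ g' x) (hg_top : Tendsto g atTop atTop) (h : f' =o[atTop] g') :
    f =o[atTop] g := by
  refine isLittleO_iff.2 fun ε hε ↦ ?_
  have hbound : ∀ᶠ x in atTop, ‖f' x‖ ≤ ε / 2 * ‖g' x‖ := isLittleO_iff.1 h (half_pos hε)
  obtain ⟨R, hR⟩ := eventually_atTop.1 (hf.and (hg.and (hg'.and hbound)))
  choose hfR hgR hgR' hboundR using hR
  have hgrowth : ∀ x ≥ R, ‖f x‖ ≤ ‖f R‖ + ε / 2 * (g x - g R) := by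
    intro x hx
    have hB : ∀ y ≥ R,
        HasDerivAt (fun y ↦ ‖f R‖ + ε / 2 * (g y - g R)) (ε / 2 * g' y) y := fun y hy ↦
      (((hgR y hy).sub_const _).const_mul _).const_add _
    refine image_norm_le_of_norm_deriv_right_le_deriv_boundary'
      (fun y hy ↦ (hfR y hy.1).continuousAt.continuousWithinAt)
      (fun y hy ↦ (hfR y hy.1).hasDerivWithinAt) (by simp)
      (fun y hy ↦ (hB y hy.1).continuousAt.continuousWithinAt)
      (fun y hy ↦ (hB y hy.1).hasDerivWithinAt) (fun y hy ↦ ?_) ⟨hx, le_rfl⟩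
    simpa only [Real.norm_of_nonneg (hgR' y hy.1)] using hboundR y hy.1
  filter_upwards [eventually_ge_atTop R, hg_top.eventually_ge_atTop 0,
    (hg_top.const_mul_atTop (half_pos hε)).eventually_ge_atTop (‖f R‖ - ε / 2 * g R)]
    with x hx hgx hconst
  rw [Real.norm_of_nonneg hgx]
  linarith [hgrowth x hx]

lemma isEquivalent_of_hasDerivAt {f f' g g' : ℝ → ℝ}
    (hf : ∀ᶠ x in atTop, HasDerivAt f (f' x) x) (hg : ∀ᶠ x in atTop, HasDerivAt g (g' x) x)
    (hg' : ∀ᶠ x in atTop, 0 ≤ g' x) (hg_top : Tendsto g atTop atTop) (h : f' ~[atTop] g') :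
    f ~[atTop] g :=
  isLittleO_of_hasDerivAt (hf.mp (hg.mono fun _ hgx hfx ↦ hfx.sub hgx)) hg hg' hg_top h

lemma isEquivalent_rpow {ι : Type*} {l : Filter ι} {f g : ι → ℝ}
    (hg : ∀ᶠ i in l, 0 ≤ g i) (h : f ~[l] g) (q : ℝ) :
    (fun i ↦ f i ^ q) ~[l] fun i ↦ g i ^ q := by
  have habs : (fun i ↦ |g i|) =ᶠ[l] g := hg.mono fun i hi ↦ abs_of_nonneg hi
  exact (IsEquivalent.rpow (fun i ↦ abs_nonneg (g i)) (h.congr_right habs.symm)).congr_right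
    (habs.fun_comp (· ^ q))

lemma tendsto_of_tendsto_strictMono_comp {ι α β : Type*} {l : Filter ι}
    [LinearOrder α] [TopologicalSpace α] [OrderTopology α]
    [LinearOrder β] [TopologicalSpace β] [OrderClosedTopology β]
    {φ : α → β} (hφ : StrictMono φ) {q : ι → α} {a : α}
    (h : Tendsto (fun i ↦ φ (q i)) l (nhds (φ a))) : Tendsto q l (nhds a) := by
  refine tendsto_order.2 ⟨fun b hb ↦ ?_, fun b hb ↦ ?_⟩
  · exact (h.eventually_const_lt (hφ hb)).mono fun i hi ↦ hφ.lt_iff_lt.1 hi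
  · exact (h.eventually_lt_const (hφ hb)).mono fun i hi ↦ hφ.lt_iff_lt.1 hi

/-- The odd power `t ↦ |t|^{k-1} t`, through which the flux depends on `u'`. -/
def signedPow (k : ℕ) (t : ℝ) : ℝ := |t| ^ (k - 1) * t

lemma signedPow_one (k : ℕ) : signedPow k 1 = 1 := by simp [signedPow]

lemma signedPow_neg (k : ℕ) (t : ℝ) : signedPow k (-t) = -signedPow k t := by
  simp [signedPow]

lemma signedPow_mul (k : ℕ) (s t : ℝ) : signedPow k (s * t) = signedPow k s * signedPow k t := by
  rw [signedPow, abs_mul, mul_pow, mul_mul_mul_comm, signedPow, signedPow]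

lemma signedPow_div (k : ℕ) (s t : ℝ) : signedPow k (s / t) = signedPow k s / signedPow k t := by
  rw [signedPow, abs_div, div_pow, div_mul_div_comm, signedPow, signedPow]

lemma signedPow_of_nonneg {k : ℕ} (hk : k ≠ 0) {t : ℝ} (ht : 0 ≤ t) : signedPow k t = t ^ k := by
  rw [signedPow, abs_of_nonneg ht, pow_sub_one_mul hk]

lemma strictMono_signedPow (k : ℕ) : StrictMono (signedPow k) := by
  refine strictMono_of_odd_strictMonoOn_nonneg (signedPow_neg k) fun s hs t _ hst ↦ ?_
  have ht0 : 0 < t := (mem_Ici.1 hs).trans_lt hst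
  rw [signedPow, signedPow, abs_of_nonneg hs, abs_of_pos ht0]
  exact mul_lt_mul' (pow_le_pow_left₀ hs hst.le _) hst hs (pow_pos ht0 _)

lemma flux_eq_signedPow (n k : ℕ) (u : ℝ → ℝ) (r : ℝ) :
    flux n k u r = r ^ (n - k) * signedPow k (deriv u r) :=
  mul_assoc _ _ _

lemma flux_div_flux (n k : ℕ) (u v : ℝ → ℝ) {r : ℝ} (hr : r ≠ 0) :
    flux n k u r / flux n k v r = signedPow k (deriv u r / deriv v r) := by
  rw [flux_eq_signedPow, flux_eq_signedPow, mul_div_mul_left _ _ (pow_ne_zero _ hr), signedPow_div]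

lemma flux_const_mul_rpow {n k : ℕ} (hk : k ≠ 0) (hkn : k ≤ n) (a s : ℝ) {r : ℝ} (hr : 0 < r) :
    flux n k (fun x ↦ a * x ^ s) r = signedPow k (a * s) * r ^ (n - k + (s - 1) * k : ℝ) := by
  have hderiv : deriv (fun x ↦ a * x ^ s) r = a * s * r ^ (s - 1) := by
    rw [((hasDerivAt_rpow_const (Or.inl hr.ne')).const_mul a).deriv, mul_assoc]
  rw [flux_eq_signedPow, hderiv, signedPow_mul, signedPow_of_nonneg hk (rpow_nonneg hr.le _),
    rpow_add hr, rpow_mul_natCast hr.le, ← Nat.cast_sub hkn, rpow_natCast]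
  ring

/-- The right-hand side of the radial `k`-Hessian equation `(flux u)' = source u`. -/
def source (n k : ℕ) (p : ℝ) (u : ℝ → ℝ) (r : ℝ) : ℝ :=
  -((k : ℝ) / binomC n k) * r ^ (n - 1) * u r ^ p

lemma source_nonpos (n k : ℕ) (p : ℝ) {u : ℝ → ℝ} {r : ℝ} (hr : 0 ≤ r) (hu : 0 ≤ u r) :
    source n k p u r ≤ 0 := by
  have hbinom : 0 ≤ binomC n k := Nat.cast_nonneg _
  rw [source, neg_mul, neg_mul, neg_nonpos]
  positivity

lemma isEquivalent_source (n k : ℕ) (p : ℝ) {u v : ℝ → ℝ} {l : Filter ℝ}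
    (hv : ∀ᶠ r in l, 0 ≤ v r) (h : u ~[l] v) : source n k p u ~[l] source n k p v :=
  IsEquivalent.refl.mul (isEquivalent_rpow hv h p)

theorem tendsto_deriv_div_deriv_of_isEquivalent {n k : ℕ} {p : ℝ} {u v : ℝ → ℝ}
    (hu : ∀ᶠ r in atTop, HasDerivAt (flux n k u) (source n k p u r) r)
    (hv : ∀ᶠ r in atTop, HasDerivAt (flux n k v) (source n k p v r) r)
    (hv_nonneg : ∀ᶠ r in atTop, 0 ≤ v r) (hv_flux : Tendsto (flux n k v) atTop atBot)
    (huv : u ~[atTop] v) :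
    Tendsto (fun r ↦ deriv u r / deriv v r) atTop (nhds 1) := by
  have hsource : ∀ᶠ r in atTop, 0 ≤ -source n k p v r := by
    filter_upwards [eventually_ge_atTop 0, hv_nonneg] with r hr hvr
    exact neg_nonneg.2 (source_nonpos n k p hr hvr)
  have hneg : (fun r ↦ -flux n k u r) ~[atTop] fun r ↦ -flux n k v r :=
    isEquivalent_of_hasDerivAt (hu.mono fun _ h ↦ h.fun_neg) (hv.mono fun _ h ↦ h.fun_neg) hsource
      (tendsto_neg_atBot_atTop.comp hv_flux) (isEquivalent_source n k p hv_nonneg huv).neg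
  have hflux : flux n k u ~[atTop] flux n k v := by simpa only [neg_neg] using hneg.neg
  have hquot : Tendsto (flux n k u / flux n k v) atTop (nhds 1) :=
    (isEquivalent_iff_tendsto_one (hv_flux.eventually_ne_atBot 0)).1 hflux
  refine tendsto_of_tendsto_strictMono_comp (strictMono_signedPow k) ?_
  rw [signedPow_one]
  exact hquot.congr' ((eventually_ne_atTop 0).mono fun r hr ↦ flux_div_flux n k u v hr)

section SingularSolution

variable {n k : ℕ} {p : ℝ}

/-- The exponent `n - 2pk/(p-k)` at which the flux of the singular solution grows. -/
def fluxExponent (n k : ℕ) (p : ℝ) : ℝ := (n : ℝ) - 2 * p * k / (p - k)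

lemma natCast_lt_of_div_lt (hkn : 2 * k < n) (hp : (n : ℝ) * k / ((n : ℝ) - 2 * k) < p) :
    (k : ℝ) < p := by
  have hnk : (0 : ℝ) < n - 2 * k := sub_pos.2 (mod_cast hkn)
  refine lt_of_le_of_lt ((le_div_iff₀ hnk).2 ?_) hp
  nlinarith [sq_nonneg (k : ℝ)]

lemma fluxExponent_pos (hkn : 2 * k < n) (hp : (n : ℝ) * k / ((n : ℝ) - 2 * k) < p) :
    0 < fluxExponent n k p := by
  have hpk : 0 < p - k := sub_pos.2 (natCast_lt_of_div_lt hkn hp)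
  have hnk : (0 : ℝ) < n - 2 * k := sub_pos.2 (mod_cast hkn)
  rw [fluxExponent, sub_pos, div_lt_iff₀ hpk]
  linarith [(div_lt_iff₀ hnk).1 hp]

lemma fluxExponent_eq_sub_mul (n k : ℕ) (p : ℝ) :
    fluxExponent n k p = n - 2 * (k : ℝ) / (p - k) * p := by
  rw [fluxExponent]
  ring

lemma fluxExponent_eq_add_mul (n : ℕ) (hpk : (k : ℝ) < p) :
    fluxExponent n k p = n - k + (-(2 * (k : ℝ) / (p - k)) - 1) * k := by
  have : p - k ≠ 0 := (sub_pos.2 hpk).ne'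
  rw [fluxExponent]
  field_simp
  ring

lemma binomC_pos (hkn : k ≤ n) : 0 < binomC n k :=
  Nat.cast_pos.2 (Nat.choose_pos (Nat.sub_le_sub_right hkn 1))

lemma Aconst_pos (hk : 0 < k) (hkn : k ≤ n) (hpk : (k : ℝ) < p) (hm : 0 < fluxExponent n k p) :
    0 < Aconst n k p := by
  have hbinom := binomC_pos hkn
  have : 0 < p - k := sub_pos.2 hpk
  rw [Aconst]
  rw [fluxExponent] at hm
  positivity

lemma Aconst_rpow_sub (hkn : k ≤ n) (hpk : (k : ℝ) < p) (hm : 0 < fluxExponent n k p) :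
    Aconst n k p ^ (p - k) =
      1 / (k : ℝ) * binomC n k * (2 * (k : ℝ) / (p - k)) ^ k * fluxExponent n k p := by
  have hbinom := binomC_pos hkn
  have hpk' : 0 < p - k := sub_pos.2 hpk
  rw [fluxExponent] at hm ⊢
  rw [Aconst, mul_rpow (by positivity) (by positivity), mul_rpow (by positivity) (by positivity),
    ← rpow_mul (by positivity), ← rpow_mul (by positivity), ← rpow_mul hm.le,
    div_mul_cancel₀ _ hpk'.ne', div_mul_cancel₀ _ hpk'.ne', rpow_one, rpow_one, rpow_natCast]

lemma Aconst_mul_pow_mul_fluxExponent (hk : 0 < k) (hkn : k ≤ n) (hpk : (k : ℝ) < p)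
    (hm : 0 < fluxExponent n k p) :
    (Aconst n k p * (2 * (k : ℝ) / (p - k))) ^ k * fluxExponent n k p =
      k / binomC n k * Aconst n k p ^ p := by
  have hbinom := (binomC_pos hkn).ne'
  have hsplit : Aconst n k p ^ p = Aconst n k p ^ (p - k) * Aconst n k p ^ k := by
    rw [← rpow_natCast (Aconst n k p) k, ← rpow_add (Aconst_pos hk hkn hpk hm), sub_add_cancel]
  rw [hsplit, Aconst_rpow_sub hkn hpk hm, mul_pow]
  field_simp

lemma uSing_pos (hk : 0 < k) (hkn : k ≤ n) (hpk : (k : ℝ) < p) (hm : 0 < fluxExponent n k p)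
    {r : ℝ} (hr : 0 < r) : 0 < uSing n k p r :=
  mul_pos (Aconst_pos hk hkn hpk hm) (rpow_pos_of_pos hr _)

lemma deriv_uSing (n : ℕ) (hpk : (k : ℝ) < p) {r : ℝ} (hr : 0 < r) :
    deriv (uSing n k p) r =
      -(Aconst n k p * (2 * (k : ℝ) / (p - k))) * r ^ (-((p + (k : ℝ)) / (p - k))) := by
  have hexp : -(2 * (k : ℝ) / (p - k)) - 1 = -((p + k) / (p - k)) := by
    have : p - k ≠ 0 := (sub_pos.2 hpk).ne'
    field_simp
    ring
  rw [show uSing n k p = fun x ↦ Aconst n k p * x ^ (-(2 * (k : ℝ) / (p - k))) from rfl,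
    ((hasDerivAt_rpow_const (Or.inl hr.ne')).const_mul _).deriv, hexp]
  ring

lemma flux_uSing (hk : 0 < k) (hkn : k ≤ n) (hpk : (k : ℝ) < p) (hm : 0 < fluxExponent n k p)
    {r : ℝ} (hr : 0 < r) :
    flux n k (uSing n k p) r =
      -(Aconst n k p * (2 * (k : ℝ) / (p - k))) ^ k * r ^ fluxExponent n k p := by
  have hA := Aconst_pos hk hkn hpk hm
  have : 0 < p - k := sub_pos.2 hpk
  have h := flux_const_mul_rpow hk.ne' hkn (Aconst n k p) (-(2 * (k : ℝ) / (p - k))) hr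
  rwa [← fluxExponent_eq_add_mul n hpk, mul_neg, signedPow_neg,
    signedPow_of_nonneg hk.ne' (by positivity)] at h

lemma source_uSing (hk : 0 < k) (hkn : k ≤ n) (hpk : (k : ℝ) < p) (hm : 0 < fluxExponent n k p)
    {r : ℝ} (hr : 0 < r) :
    source n k p (uSing n k p) r =
      -(k / binomC n k * Aconst n k p ^ p) * r ^ (fluxExponent n k p - 1) := by
  have hpow : r ^ (fluxExponent n k p - 1) =
      r ^ (n - 1) * r ^ (-(2 * (k : ℝ) / (p - k)) * p) := by
    rw [← rpow_natCast r (n - 1), ← rpow_add hr, Nat.cast_sub (by omega : 1 ≤ n), Nat.cast_one,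
      fluxExponent_eq_sub_mul]
    ring_nf
  rw [source, uSing, mul_rpow (Aconst_pos hk hkn hpk hm).le (rpow_nonneg hr.le _),
    ← rpow_mul hr.le, hpow]
  ring

lemma hasDerivAt_flux_uSing (hk : 0 < k) (hkn : k ≤ n) (hpk : (k : ℝ) < p)
    (hm : 0 < fluxExponent n k p) {r : ℝ} (hr : 0 < r) :
    HasDerivAt (flux n k (uSing n k p)) (source n k p (uSing n k p) r) r := by
  rw [source_uSing hk hkn hpk hm hr, ← Aconst_mul_pow_mul_fluxExponent hk hkn hpk hm, ← neg_mul,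
    mul_assoc]
  refine ((hasDerivAt_rpow_const (Or.inl hr.ne')).const_mul _).congr_of_eventuallyEq ?_
  filter_upwards [lt_mem_nhds hr] with x hx using flux_uSing hk hkn hpk hm hx

lemma tendsto_flux_uSing_atBot (hk : 0 < k) (hkn : k ≤ n) (hpk : (k : ℝ) < p)
    (hm : 0 < fluxExponent n k p) : Tendsto (flux n k (uSing n k p)) atTop atBot := by
  have hA := Aconst_pos hk hkn hpk hm
  have : 0 < p - k := sub_pos.2 hpk
  refine ((tendsto_rpow_atTop hm).const_mul_atTop_of_neg (neg_lt_zero.2 ?_)).congr'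
    ((eventually_gt_atTop 0).mono fun r hr ↦ (flux_uSing hk hkn hpk hm hr).symm)
  positivity

end SingularSolution

theorem deriv_ratio_tendsto_one_general {n k : ℕ} {p : ℝ} {u : ℝ → ℝ}
    (hk : 0 < k) (hkn : 2 * k < n) (hp : (n : ℝ) * k / ((n : ℝ) - 2 * k) < p)
    (hu : ∀ᶠ r in atTop, HasDerivAt (flux n k u) (source n k p u r) r)
    (hlim : Tendsto (fun r : ℝ => u r / uSing n k p r) atTop (nhds 1)) :
    Tendsto (fun r : ℝ => deriv u r /
        (-(Aconst n k p * (2 * (k : ℝ) / (p - k))) * r ^ (-((p + (k : ℝ)) / (p - k)))))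
      atTop (nhds 1) := by
  have hkn' : k ≤ n := by omega
  have hpk := natCast_lt_of_div_lt hkn hp
  have hm := fluxExponent_pos hkn hp
  have hlarge : ∀ᶠ r : ℝ in atTop, 0 < r := eventually_gt_atTop 0
  have hratio : Tendsto (fun r ↦ deriv u r / deriv (uSing n k p) r) atTop (nhds 1) :=
    tendsto_deriv_div_deriv_of_isEquivalent hu
      (hlarge.mono fun r hr ↦ hasDerivAt_flux_uSing hk hkn' hpk hm hr)
      (hlarge.mono fun r hr ↦ (uSing_pos hk hkn' hpk hm hr).le)
      (tendsto_flux_uSing_atBot hk hkn' hpk hm) (isEquivalent_of_tendsto_one hlim)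
  refine hratio.congr' (hlarge.mono fun r hr ↦ ?_)
  simp only [deriv_uSing n hpk hr]

/-- if `u/u_s → 1` at infinity, then `u'/u_s' → 1` at infinity, where
`u_s'(r) = -A (2k/(p-k)) r^{-(p+k)/(p-k)}`. -/
theorem deriv_ratio_tendsto_one (n k : ℕ) (p ρ : ℝ) (u : ℝ → ℝ)
    (hn : 3 ≤ n) (hk1 : 1 < k) (hk2 : 2 * k < n) (hρ : 0 < ρ)
    (hp : (n : ℝ) * k / ((n : ℝ) - 2 * k) < p)
    (hu : IsRegularSolution n k p ρ u)
    (hlim : Tendsto (fun r : ℝ => u r / uSing n k p r) atTop (nhds 1)) :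
    Tendsto (fun r : ℝ => deriv u r /
        (-(Aconst n k p * (2 * (k : ℝ) / (p - k))) * r ^ (-((p + (k : ℝ)) / (p - k)))))
      atTop (nhds 1) := by
  exact deriv_ratio_tendsto_one_general (by omega) hk2 hp
    ((eventually_gt_atTop 0).mono hu.eqn) hlim

end KHessianPaper
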